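/- (Skryabin) Let H be a Hopf algebra over a field k which is Noetherian as a ring and residually finite-dimensional. Then the antipode S : H → H is bijective. -/

import Mathlib

/-!
Write `Δ`, `ε`, `S` for the structure maps of `H`. Every `c : H` is a linear combination of the
entries of a matrix `X` over `H` with `Δ xᵢⱼ = ∑ xᵢₗ ⊗ xₗⱼ` and `ε xᵢⱼ = δᵢⱼ`, and the entrywise
antipode `S(X)` is the two-sided inverse of `X`.

*Injectivity.* Write `c = ∑ aᵢ dᵢ` with `dᵢ = ∑ wⱼ xᵢⱼ`, and let `N ⊆ Hⁿ` be the left submodule of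
rows `v` with `∑ vᵢ ⊗ S(dᵢ) = 0`. As `S` reverses the comultiplication, `N` is stable under
`v ↦ v S(X)`, so `N ≤ N X`. The ascending chain `N ≤ N X ≤ N X² ≤ ⋯` stabilises, and `X` is
invertible, so `N X = N`. If `S c = 0`, then `a ∈ N`, hence `a X ∈ N`, and applying `ε` to the
second factor of `∑ (a X)ⱼ ⊗ S(dⱼ) = 0` yields `c = 0`.

*Surjectivity.* It suffices that the transpose `Xᵀ` has a left inverse `Z`: applying `S` to
`Z Xᵀ = 1` gives `X = S(Z)ᵀ`, so `c` lies in the image of `S`. Let `J` be the left ideal of all `h`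
such that `h • 1 = Z Xᵀ` for some `Z`. Since `S` is injective, `Z ↦ Z Xᵀ` is an injective
endomorphism of the Noetherian module `Mₙ(H)`, so its image meets `H • 1` nontrivially and `J ≠ 0`.
Applying `(S² ⊗ id) ∘ Δ` to `Z Xᵀ = h • 1` and cancelling the first tensor factors shows that
`Δ J ⊆ H ⊗ J`, again because `S` is injective. Such a nonzero left ideal is all of `H`: by
`h = ∑ h₁ ε(h₂)` some `y ∈ J` has `ε y ≠ 0`, and `ε y = ∑ S(y₁) y₂ ∈ J`.
-/

namespace NoetherianHopf

open Coalgebra HopfAlgebra TensorProduct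
open scoped Matrix

section Noetherian

variable {R M : Type*} [Ring R] [AddCommGroup M] [Module R M] [IsNoetherian R M]
  {f : M →ₗ[R] M}

lemma map_eq_of_le_map (hf : Function.Injective f) {N : Submodule R M} (hN : N ≤ N.map f) :
    N.map f = N := by
  have hmono : Monotone fun m : ℕ => N.map (f ^ m) := by
    refine monotone_nat_of_le_succ fun m => ?_
    rw [pow_succ, Module.End.mul_eq_comp, Submodule.map_comp]
    exact Submodule.map_mono hN
  obtain ⟨m, hm⟩ := monotone_stabilizes_iff_noetherian.mpr ‹IsNoetherian R M› ⟨_, hmono⟩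
  have hstable : (N.map f).map (f ^ m) = N.map (f ^ m) := by
    rw [← Submodule.map_comp, ← Module.End.mul_eq_comp, ← pow_succ]
    exact (hm (m + 1) m.le_succ).symm
  have hinj : Function.Injective (f ^ m) := by
    rw [Module.End.coe_pow]
    exact hf.iterate m
  exact Submodule.map_injective_of_injective hinj hstable

lemma exists_ne_zero_smul_mem_range [Nontrivial R] (hf : Function.Injective f) (v : M) :
    ∃ r : R, r ≠ 0 ∧ r • v ∈ LinearMap.range f := by
  by_contra! h
  have hinj : Function.Injective (f.coprod (LinearMap.toSpanSingleton R M v)) := by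
    rw [injective_iff_map_eq_zero]
    rintro ⟨u, r⟩ hur
    have hu : f u + r • v = 0 := by simpa using hur
    have hr : r = 0 := by
      by_contra hr
      exact h r hr ⟨-u, by rw [map_neg, neg_eq_iff_add_eq_zero, hu]⟩
    rw [hr, zero_smul, add_zero] at hu
    exact Prod.ext ((injective_iff_map_eq_zero f).mp hf u hu) hr
  exact not_subsingleton R (IsNoetherian.subsingleton_of_prod_injective _ hinj)

end Noetherian

section Slice

variable {R M M' N N' : Type*} [CommSemiring R] [AddCommMonoid M] [Module R M]
  [AddCommMonoid M'] [Module R M'] [AddCommMonoid N] [Module R N] [AddCommMonoid N'] [Module R N']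

/-- The contraction `m ⊗ n ↦ g m • n` of the first tensor factor, linear in `g`. -/
noncomputable def sliceLeft : (M →ₗ[R] R) →ₗ[R] M ⊗[R] N →ₗ[R] N :=
  LinearMap.compRight R (TensorProduct.lid R N).toLinearMap ∘ₗ LinearMap.rTensorHom N

/-- The contraction `m ⊗ n ↦ g n • m` of the second tensor factor. -/
noncomputable def sliceRight (g : N →ₗ[R] R) : M ⊗[R] N →ₗ[R] M :=
  (TensorProduct.rid R M).toLinearMap ∘ₗ g.lTensor M

@[simp]
lemma sliceLeft_tmul (g : M →ₗ[R] R) (m : M) (n : N) :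
    sliceLeft g (m ⊗ₜ[R] n) = g m • n := by
  simp [sliceLeft]

@[simp]
lemma sliceRight_tmul (g : N →ₗ[R] R) (m : M) (n : N) :
    sliceRight g (m ⊗ₜ[R] n) = g n • m := by
  simp [sliceRight]

lemma sliceLeft_rTensor (g : M' →ₗ[R] R) (f : M →ₗ[R] M') (t : M ⊗[R] N) :
    sliceLeft g (f.rTensor N t) = sliceLeft (g ∘ₗ f) t := by
  induction t with
  | zero => simp
  | add t u ht hu => simp only [map_add, ht, hu]
  | tmul m n => simp

lemma sliceLeft_lTensor (g : M →ₗ[R] R) (f : N →ₗ[R] N') (t : M ⊗[R] N) :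
    sliceLeft g (f.lTensor M t) = f (sliceLeft g t) := by
  induction t with
  | zero => simp
  | add t u ht hu => simp only [map_add, ht, hu]
  | tmul m n => simp

lemma sliceRight_rTensor (g : N →ₗ[R] R) (f : M →ₗ[R] M') (t : M ⊗[R] N) :
    sliceRight g (f.rTensor N t) = f (sliceRight g t) := by
  induction t with
  | zero => simp
  | add t u ht hu => simp only [map_add, ht, hu]
  | tmul m n => simp

lemma sliceLeft_mul_one_tmul {A B : Type*} [Semiring A] [Algebra R A] [Semiring B] [Algebra R B]
    (g : A →ₗ[R] R) (t : A ⊗[R] B) (b : B) :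
    sliceLeft g (t * 1 ⊗ₜ[R] b) = sliceLeft g t * b := by
  induction t with
  | zero => simp
  | add t u ht hu => simp only [add_mul, map_add, ht, hu]
  | tmul a b' => simp

end Slice

section Coalgebra

variable {R C : Type*} [CommSemiring R] [AddCommMonoid C] [Module R C] [Coalgebra R C]

lemma sliceLeft_comul_sliceLeft_comul (g g' : C →ₗ[R] R) (c : C) :
    sliceLeft g' (comul (sliceLeft g (comul c))) =
      sliceLeft (LinearMap.mul' R R ∘ₗ TensorProduct.map g g' ∘ₗ comul) (comul (R := R) c) := by
  have h_assoc : sliceLeft g' ∘ₗ sliceLeft g ∘ₗ (TensorProduct.assoc R C C C).toLinearMap =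
      sliceLeft (LinearMap.mul' R R ∘ₗ TensorProduct.map g g') := by
    ext
    simp [← mul_smul]
  rw [← sliceLeft_lTensor, ← coassoc_apply, ← LinearMap.comp_assoc, ← sliceLeft_rTensor, ← h_assoc]
  rfl

lemma comul_sliceRight_comul (g : C →ₗ[R] R) (c : C) :
    comul (R := R) (sliceRight g (comul (R := R) c)) =
      (sliceRight g ∘ₗ comul).lTensor C (comul (R := R) c) := by
  have h_assoc : (sliceRight g).lTensor C ∘ₗ (TensorProduct.assoc R C C C).toLinearMap =
      sliceRight g := by
    ext
    simp
  rw [← sliceRight_rTensor, LinearMap.lTensor_comp_apply, ← coassoc_apply, ← h_assoc]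
  rfl

lemma counit_sliceRight_comul (g : C →ₗ[R] R) (c : C) :
    counit (R := R) (sliceRight g (comul (R := R) c)) = g c := by
  rw [← sliceRight_rTensor, rTensor_counit_comul, sliceRight_tmul, smul_eq_mul, mul_one]

lemma sliceLeft_counit_comul (c : C) : sliceLeft counit (comul (R := R) c) = c := by
  simp [sliceLeft]

lemma sliceRight_counit_comul (c : C) : sliceRight counit (comul (R := R) c) = c := by
  simp [sliceRight]

/-- The representation of `comul c` obtained by expanding the first tensor factor in a basis. -/
noncomputable def basisRepr {ι : Type*} [DecidableEq ι] (b : Module.Basis ι R C) (c : C) :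
    Repr R c ι where
  index := (TensorProduct.equivFinsuppOfBasisLeft b (comul (R := R) c)).support
  left := b
  right i := sliceLeft (b.coord i) (comul (R := R) c)
  eq := by
    conv_rhs => rw [← (TensorProduct.equivFinsuppOfBasisLeft b).symm_apply_apply (comul c),
      TensorProduct.equivFinsuppOfBasisLeft_symm_apply]
    simp [Finsupp.sum, TensorProduct.equivFinsuppOfBasisLeft_apply, sliceLeft]

end Coalgebra

section FiniteCoideal

variable (R : Type*) {C : Type*} [CommRing R] [IsNoetherianRing R] [AddCommGroup C] [Module R C]
  [Coalgebra R C]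

lemma exists_finite_sliceLeft_stable (c : C) : ∃ D : Submodule R C, Module.Finite R D ∧ c ∈ D ∧
    ∀ d ∈ D, ∀ g : C →ₗ[R] R, sliceLeft g (comul d) ∈ D := by
  let D : Submodule R C := LinearMap.range (sliceLeft.flip (comul c))
  have h_fg : (Submodule.span R ((ℛ R c).right '' (ℛ R c).index)).FG :=
    Submodule.fg_span ((Finset.finite_toSet _).image _)
  have hD : D ≤ Submodule.span R ((ℛ R c).right '' (ℛ R c).index) := by
    rintro _ ⟨g, rfl⟩
    rw [LinearMap.flip_apply, ← (ℛ R c).eq, map_sum]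
    refine Submodule.sum_mem _ fun i hi => ?_
    rw [sliceLeft_tmul]
    exact Submodule.smul_mem _ _ (Submodule.subset_span ⟨i, hi, rfl⟩)
  refine ⟨D, ?_, ⟨counit, sliceLeft_counit_comul c⟩, ?_⟩
  · have := Module.Finite.of_fg h_fg
    exact Module.Finite.of_injective (Submodule.inclusion hD) (Submodule.inclusion_injective hD)
  · rintro _ ⟨g, rfl⟩ g'
    exact ⟨_, (sliceLeft_comul_sliceLeft_comul g g' c).symm⟩

end FiniteCoideal

/-- The defining relations of the matrix coalgebra: `X` is the matrix of coefficients of a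
finite free comodule with respect to a basis. -/
structure IsComatrix (R : Type*) {C ι : Type*} [CommSemiring R] [AddCommMonoid C] [Module R C]
    [Coalgebra R C] [Fintype ι] [DecidableEq ι] (X : Matrix ι ι C) : Prop where
  comul_apply : ∀ i j, comul (R := R) (X i j) = ∑ l, X i l ⊗ₜ[R] X l j
  counit_apply : ∀ i j, counit (R := R) (X i j) = (1 : Matrix ι ι R) i j

lemma exists_extended_dual_basis {k V : Type*} [Field k] [AddCommGroup V] [Module k V]
    (D : Submodule k V) [FiniteDimensional k D] :
    ∃ (n : ℕ) (d : Fin n → V) (φ : Fin n → V →ₗ[k] k), (∀ i, d i ∈ D) ∧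
      (∀ i j, φ j (d i) = (1 : Matrix (Fin n) (Fin n) k) i j) ∧
      ∀ v ∈ D, ∑ j, φ j v • d j = v := by
  obtain ⟨p, hp⟩ := LinearMap.exists_leftInverse_of_injective D.subtype D.ker_subtype
  have hp' : ∀ v : D, p v = v := LinearMap.congr_fun hp
  let b := Module.finBasis k D
  refine ⟨_, fun i => b i, fun j => b.coord j ∘ₗ p, fun i => (b i).2, fun i j => ?_, fun v hv => ?_⟩
  · simp [hp', Matrix.one_apply, Finsupp.single_apply]
  · simpa only [map_sum, map_smul, LinearMap.comp_apply, hp' ⟨v, hv⟩,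
      Module.Basis.coord_apply, Submodule.subtype_apply] using
      congrArg D.subtype (b.sum_repr ⟨v, hv⟩)

theorem exists_comatrix (k : Type*) {C : Type*} [Field k] [AddCommGroup C] [Module k C]
    [Coalgebra k C] (c : C) : ∃ (n : ℕ) (X : Matrix (Fin n) (Fin n) C) (a w : Fin n → k),
      IsComatrix k X ∧ c = ∑ i, a i • ∑ j, w j • X i j := by
  classical
  obtain ⟨D, hD_fin, hcD, hD⟩ := exists_finite_sliceLeft_stable k c
  obtain ⟨n, d, φ, hdD, hφd, hφ⟩ := exists_extended_dual_basis D
  let X : Matrix (Fin n) (Fin n) C := Matrix.of fun i j => sliceRight (φ j) (comul (R := k) (d i))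
  have h_comul : ∀ i, comul (R := k) (d i) = ∑ j, X i j ⊗ₜ[k] d j := by
    intro i
    let r := basisRepr (Module.Basis.ofVectorSpace k C) (d i)
    have hr : ∀ l, r.right l ∈ D := fun l => hD _ (hdD i) _
    have hX : ∀ j, X i j = ∑ l ∈ r.index, φ j (r.right l) • r.left l := by
      intro j
      simp [X, ← r.eq]
    calc comul (d i) = ∑ l ∈ r.index, r.left l ⊗ₜ[k] ∑ j, φ j (r.right l) • d j := by
          simp only [hφ _ (hr _), r.eq]
      _ = ∑ j, X i j ⊗ₜ[k] d j := by
          simp only [hX, TensorProduct.tmul_sum, TensorProduct.sum_tmul, TensorProduct.smul_tmul]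
          exact Finset.sum_comm
  have hd : ∀ i, d i = ∑ j, counit (R := k) (d j) • X i j := by
    intro i
    simpa [sliceRight_counit_comul] using congrArg (sliceRight counit) (h_comul i)
  refine ⟨n, X, fun i => φ i c, fun j => counit (d j), ⟨fun i j => ?_, fun i j => ?_⟩, ?_⟩
  · calc comul (X i j) = (sliceRight (φ j) ∘ₗ comul).lTensor C (comul (R := k) (d i)) :=
          comul_sliceRight_comul (φ j) (d i)
      _ = ∑ l, X i l ⊗ₜ[k] X l j := by
          simp only [h_comul, map_sum, LinearMap.lTensor_tmul]
          rfl
  · rw [← hφd i j]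
    exact counit_sliceRight_comul (φ j) (d i)
  · simp only [← hd, hφ c hcD]

section Matrix

variable {l m n o α : Type*} [Fintype l] [Fintype m] [NonUnitalSemiring α]

/- Over a noncommutative ring `(A * B)ᵀ` need not be `Bᵀ * Aᵀ`, so identities in which transposed
and untransposed matrices are mixed are rearranged entry by entry. -/
lemma transpose_transpose_mul_mul_of_commute {A : Matrix l m α} {B : Matrix m n α}
    {C : Matrix l o α} (hBC : ∀ i j p q, Commute (B i j) (C p q)) :
    ((A * B)ᵀ * C)ᵀ = (Aᵀ * C)ᵀ * B := by
  ext i j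
  simp only [Matrix.transpose_apply, Matrix.mul_apply, Finset.sum_mul]
  rw [Finset.sum_comm]
  simp only [mul_assoc, (hBC _ _ _ _).eq]

end Matrix

section Bialgebra

variable {R A ι : Type*} [CommSemiring R] [Fintype ι]

lemma sum_vecMul_tmul_eq_zero [Semiring A] [Bialgebra R A] {e v : ι → A}
    {Y : Matrix ι ι A} (he : ∀ i, comul (R := R) (e i) = ∑ l, e l ⊗ₜ[R] Y i l)
    (hv : ∑ i, v i ⊗ₜ[R] e i = 0) : ∑ l, (v ᵥ* Y) l ⊗ₜ[R] e l = 0 := by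
  -- The map `Θ (a ⊗ b) = a b₂ ⊗ b₁` sends one sum to the other.
  let Θ : A ⊗[R] A →ₗ[R] A ⊗[R] A :=
    (LinearMap.mul' R A).rTensor A ∘ₗ (TensorProduct.assoc R A A A).symm.toLinearMap ∘ₗ
      ((TensorProduct.comm R A A).toLinearMap ∘ₗ comul).lTensor A
  calc ∑ l, (v ᵥ* Y) l ⊗ₜ[R] e l = ∑ i, ∑ l, (v i * Y i l) ⊗ₜ[R] e l := by
        simp only [Matrix.vecMul, dotProduct, TensorProduct.sum_tmul]
        exact Finset.sum_comm
    _ = Θ (∑ i, v i ⊗ₜ[R] e i) := by simp [Θ, he, TensorProduct.tmul_sum]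
    _ = 0 := by rw [hv, map_zero]

lemma sum_vecMul_tmul_eq_zero_of_inverse [DecidableEq ι] [Ring A] [IsNoetherianRing A]
    [Bialgebra R A] {e v : ι → A} {X Y : Matrix ι ι A} (hXY : X * Y = 1) (hYX : Y * X = 1)
    (he : ∀ i, comul (R := R) (e i) = ∑ l, e l ⊗ₜ[R] Y i l)
    (hv : ∑ i, v i ⊗ₜ[R] e i = 0) : ∑ l, (v ᵥ* X) l ⊗ₜ[R] e l = 0 := by
  let N : Submodule A (ι → A) :=
    LinearMap.ker (Fintype.linearCombination A fun i => (1 : A) ⊗ₜ[R] e i)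
  have hN : ∀ u, u ∈ N ↔ ∑ i, u i ⊗ₜ[R] e i = 0 := by
    intro u
    simp [N, Fintype.linearCombination_apply, TensorProduct.smul_tmul']
  have hX_inj : Function.Injective X.vecMulLinear :=
    Function.LeftInverse.injective (g := fun u => u ᵥ* Y) fun u => by simp [hXY]
  have hN_le : N ≤ N.map X.vecMulLinear := fun u hu =>
    ⟨u ᵥ* Y, (hN _).mpr (sum_vecMul_tmul_eq_zero he ((hN u).mp hu)), by simp [hYX]⟩
  rw [← hN, ← map_eq_of_le_map hX_inj hN_le]
  exact ⟨v, (hN v).mpr hv, rfl⟩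

end Bialgebra

section HopfAlgebra

variable {R A ι : Type*} [CommSemiring R] [Semiring A] [HopfAlgebra R A] [Fintype ι]
  [DecidableEq ι]

local notation "ιₗ" => (Algebra.TensorProduct.includeLeft : A →ₐ[R] A ⊗[R] A)
local notation "ιᵣ" => (Algebra.TensorProduct.includeRight : A →ₐ[R] A ⊗[R] A)

lemma map_antipode_mul_transpose_map_antipode {l m n : Type*} [Fintype m] (Y : Matrix n m A)
    (Z : Matrix l m A) :
    Y.map (antipode R) * (Z.map (antipode R))ᵀ = ((Z * Yᵀ).map (antipode R))ᵀ := by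
  ext i j
  simp [Matrix.mul_apply, antipode_mul_antidistrib]

lemma map_antipode_one {m : Type*} [DecidableEq m] : (1 : Matrix m m A).map (antipode R) = 1 :=
  Matrix.map_one _ (map_zero _) antipode_one

variable (R A) in
/-- The square of the antipode, as an algebra endomorphism. -/
noncomputable def antipodeSq : A →ₐ[R] A :=
  AlgHom.ofLinearMap (antipode R ∘ₗ antipode R) (by simp) (by simp [antipode_mul_antidistrib])

variable (R A) in
/-- The algebra homomorphism `(S² ⊗ id) ∘ Δ`. -/
noncomputable def antipodeSqComul : A →ₐ[R] A ⊗[R] A :=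
  (Algebra.TensorProduct.map (antipodeSq R A) (AlgHom.id R A)).comp (Bialgebra.comulAlgHom R A)

namespace IsComatrix

variable {X : Matrix ι ι A} (hX : IsComatrix R X)
include hX

lemma map_antipode_mul : X.map (antipode R) * X = 1 := by
  ext i j
  have h := mul_antipode_rTensor_comul_apply (R := R) (X i j)
  rw [hX.comul_apply, hX.counit_apply] at h
  simpa [Matrix.mul_apply, Matrix.one_apply, apply_ite] using h

lemma mul_map_antipode : X * X.map (antipode R) = 1 := by
  ext i j
  have h := mul_antipode_lTensor_comul_apply (R := R) (X i j)
  rw [hX.comul_apply, hX.counit_apply] at h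
  simpa [Matrix.mul_apply, Matrix.one_apply, apply_ite] using h

lemma map_comul : X.map (Bialgebra.comulAlgHom R A) = X.map ιₗ * X.map ιᵣ := by
  ext i j
  simp [Matrix.mul_apply, hX.comul_apply]

lemma map_comul_map_antipode : (X.map (antipode R)).map (Bialgebra.comulAlgHom R A) =
    (X.map (antipode R)).map ιᵣ * (X.map (antipode R)).map ιₗ := by
  have h_left : (X.map (antipode R)).map (Bialgebra.comulAlgHom R A) *
      X.map (Bialgebra.comulAlgHom R A) = 1 := by
    rw [← Matrix.map_mul, hX.map_antipode_mul, Matrix.map_one _ (map_zero _) (map_one _)]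
  have h_right : X.map (Bialgebra.comulAlgHom R A) *
      ((X.map (antipode R)).map ιᵣ * (X.map (antipode R)).map ιₗ) = 1 := by
    rw [hX.map_comul, mul_assoc, ← mul_assoc (X.map ιᵣ), ← Matrix.map_mul, hX.mul_map_antipode,
      Matrix.map_one _ (map_zero _) (map_one _), one_mul, ← Matrix.map_mul, hX.mul_map_antipode,
      Matrix.map_one _ (map_zero _) (map_one _)]
  exact left_inv_eq_right_inv h_left h_right

lemma comul_antipode_sum_smul (w : ι → R) (i : ι) :
    comul (R := R) (antipode R (∑ j, w j • X i j)) =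
      ∑ l, antipode R (∑ j, w j • X l j) ⊗ₜ[R] antipode R (X i l) := by
  have hS : ∀ j, comul (R := R) (antipode R (X i j)) =
      ∑ l, antipode R (X l j) ⊗ₜ[R] antipode R (X i l) := by
    intro j
    simpa [Matrix.mul_apply] using congrFun₂ hX.map_comul_map_antipode i j
  simp only [map_sum, map_smul, hS, TensorProduct.sum_tmul, Finset.smul_sum,
    TensorProduct.smul_tmul']
  exact Finset.sum_comm

lemma transpose_map_antipodeSq_mul : (X.map (antipodeSq R A))ᵀ * (X.map (antipode R))ᵀ = 1 := by
  calc (X.map (antipodeSq R A))ᵀ * (X.map (antipode R))ᵀ =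
        ((X.map (antipode R))ᵀ).map (antipode R) * (X.map (antipode R))ᵀ := rfl
    _ = 1 := by
        rw [map_antipode_mul_transpose_map_antipode, Matrix.transpose_transpose,
          hX.mul_map_antipode, map_antipode_one, Matrix.transpose_one]

lemma transpose_map_antipodeSqComul_mul :
    (X.map (antipodeSqComul R A))ᵀ * ((X.map (antipode R)).map ιₗ)ᵀ = (X.map ιᵣ)ᵀ := by
  have h_comul : (X.map (antipodeSqComul R A))ᵀ =
      (X.map ιᵣ)ᵀ * ((X.map (antipodeSq R A)).map ιₗ)ᵀ := by
    ext i j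
    simp [antipodeSqComul, hX.comul_apply, Matrix.mul_apply]
  rw [h_comul, mul_assoc, ← Matrix.transpose_map (f := ιₗ), ← Matrix.transpose_map (f := ιₗ),
    ← Matrix.map_mul, hX.transpose_map_antipodeSq_mul, Matrix.map_one _ (map_zero _) (map_one _),
    mul_one]

lemma exists_mul_transpose_map_includeRight {Z : Matrix ι ι A} {h : A} (hZ : Z * Xᵀ = h • 1) :
    ∃ W : Matrix ι ι (A ⊗[R] A), W * (X.map ιᵣ)ᵀ = antipodeSqComul R A h • 1 := by
  let T := antipodeSqComul R A
  have hZT : Z.map T * (X.map ιᵣ)ᵀ = T h • ((X.map (antipode R)).map ιₗ)ᵀ := by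
    rw [← hX.transpose_map_antipodeSqComul_mul, ← mul_assoc, ← Matrix.transpose_map,
      ← Matrix.map_mul, hZ, Matrix.map_smul' _ _ _ (map_mul T),
      Matrix.map_one _ (map_zero _) (map_one _), Matrix.smul_mul, one_mul]
  refine ⟨((Z.map T)ᵀ * X.map ιₗ)ᵀ, ?_⟩
  calc ((Z.map T)ᵀ * X.map ιₗ)ᵀ * (X.map ιᵣ)ᵀ = ((Z.map T * (X.map ιᵣ)ᵀ)ᵀ * X.map ιₗ)ᵀ :=
        (transpose_transpose_mul_mul_of_commute fun i j p q => by
          simp [Commute, SemiconjBy]).symm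
    _ = (T h • ((X.map (antipode R)).map ιₗ * X.map ιₗ))ᵀ := by
        rw [hZT, Matrix.transpose_smul, Matrix.transpose_transpose, Matrix.smul_mul]
    _ = T h • 1 := by
        rw [← Matrix.map_mul, hX.map_antipode_mul, Matrix.map_one _ (map_zero _) (map_one _),
          Matrix.transpose_smul, Matrix.transpose_one]

end IsComatrix

end HopfAlgebra

section TransposeInverse

variable {R A ι : Type*} [Fintype ι] [DecidableEq ι]

/-- The left ideal of those `h` for which `h • 1` is a left multiple of the matrix `X`. -/
def scalarIdeal [Semiring A] (X : Matrix ι ι A) : Ideal A :=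
  (LinearMap.range (mulRightLinearMap ι A X)).comap (LinearMap.toSpanSingleton A _ 1)

lemma mem_scalarIdeal [Semiring A] {X : Matrix ι ι A} {h : A} :
    h ∈ scalarIdeal X ↔ ∃ Z : Matrix ι ι A, Z * X = h • 1 :=
  Iff.rfl

lemma IsComatrix.mulRightLinearMap_transpose_injective [CommSemiring R] [Ring A] [HopfAlgebra R A]
    {X : Matrix ι ι A} (hX : IsComatrix R X) (hS : Function.Injective (antipode R (A := A))) :
    Function.Injective (mulRightLinearMap ι A Xᵀ) := by
  rw [injective_iff_map_eq_zero]
  intro Z hZ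
  rw [mulRightLinearMap_apply] at hZ
  have h : X.map (antipode R) * (Z.map (antipode R))ᵀ = 0 := by
    rw [map_antipode_mul_transpose_map_antipode, hZ, Matrix.map_zero _ (map_zero _),
      Matrix.transpose_zero]
  have hSZ : (Z.map (antipode R))ᵀ = 0 := by
    rw [← one_mul (Z.map (antipode R))ᵀ, ← hX.mul_map_antipode, mul_assoc, h, mul_zero]
  ext i j
  simpa using hS ((congrFun₂ hSZ j i).trans (map_zero _).symm)

end TransposeInverse

section Field

variable {k H : Type*} [Field k] [Ring H] [HopfAlgebra k H]

lemma IsComatrix.sliceLeft_comul_mem_scalarIdeal {ι : Type*} [Fintype ι] [DecidableEq ι]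
    {X : Matrix ι ι H} (hX : IsComatrix k X) (hS : Function.Injective (antipode k (A := H)))
    {h : H} (hh : h ∈ scalarIdeal Xᵀ) (g : H →ₗ[k] k) :
    sliceLeft g (comul h) ∈ scalarIdeal Xᵀ := by
  obtain ⟨Z, hZ⟩ := mem_scalarIdeal.mp hh
  obtain ⟨W, hW⟩ := hX.exists_mul_transpose_map_includeRight hZ
  obtain ⟨ρ, hρ⟩ := LinearMap.exists_leftInverse_of_injective (antipodeSq k H).toLinearMap
    (LinearMap.ker_eq_bot.mpr (hS.comp hS))
  have h_slice : sliceLeft (g ∘ₗ ρ) (antipodeSqComul k H h) = sliceLeft g (comul h) :=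
    calc sliceLeft (g ∘ₗ ρ) (antipodeSqComul k H h) =
          sliceLeft ((g ∘ₗ ρ) ∘ₗ (antipodeSq k H).toLinearMap) (comul h) :=
          sliceLeft_rTensor _ _ _
      _ = sliceLeft g (comul h) := by rw [LinearMap.comp_assoc, hρ, LinearMap.comp_id]
  refine mem_scalarIdeal.mpr ⟨W.map (sliceLeft (g ∘ₗ ρ)), ?_⟩
  calc W.map (sliceLeft (g ∘ₗ ρ)) * Xᵀ =
        (W * (X.map Algebra.TensorProduct.includeRight)ᵀ).map (sliceLeft (g ∘ₗ ρ)) := by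
        ext i j
        simp [Matrix.mul_apply, sliceLeft_mul_one_tmul]
    _ = sliceLeft g (comul h) • 1 := by
        rw [hW, Matrix.smul_one_eq_diagonal, Matrix.smul_one_eq_diagonal,
          Matrix.diagonal_map (map_zero _), h_slice]

lemma ideal_eq_top_of_sliceLeft_comul_mem {J : Ideal H} (hJ : J ≠ ⊥)
    (h_comul : ∀ h ∈ J, ∀ g : H →ₗ[k] k, sliceLeft g (comul h) ∈ J) : J = ⊤ := by
  classical
  obtain ⟨h, hhJ, hh⟩ := J.ne_bot_iff.mp hJ
  obtain ⟨y, hyJ, hy⟩ : ∃ y ∈ J, counit (R := k) y ≠ 0 := by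
    by_contra! hε
    let r := basisRepr (Module.Basis.ofVectorSpace k H) h
    apply hh
    calc h = sliceRight counit (comul h) := (sliceRight_counit_comul h).symm
      _ = ∑ i ∈ r.index, counit (R := k) (r.right i) • r.left i := by
          rw [← r.eq, map_sum]
          simp only [sliceRight_tmul]
      _ = 0 := Finset.sum_eq_zero fun i _ => by
          rw [hε (r.right i) (h_comul h hhJ _), zero_smul]
  let r := basisRepr (Module.Basis.ofVectorSpace k H) y
  have hεJ : algebraMap k H (counit y) ∈ J := by
    rw [← sum_antipode_mul_eq_algebraMap_counit r]
    exact J.sum_mem fun i _ => J.mul_mem_left _ (h_comul y hyJ _)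
  exact J.eq_top_of_isUnit_mem hεJ ((IsUnit.mk0 _ hy).map (algebraMap k H))

variable [IsNoetherianRing H]

theorem antipode_injective : Function.Injective (antipode k (A := H)) := by
  rw [injective_iff_map_eq_zero]
  intro c hc
  obtain ⟨n, X, a, w, hX, rfl⟩ := exists_comatrix k c
  let a' : Fin n → H := fun i => algebraMap k H (a i)
  have ha : ∑ i, a' i ⊗ₜ[k] antipode k (∑ j, w j • X i j) = 0 := by
    simp only [a', Algebra.algebraMap_eq_smul_one, TensorProduct.smul_tmul,
      ← TensorProduct.tmul_sum, ← map_smul, ← map_sum, hc, TensorProduct.tmul_zero]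
  have haX := sum_vecMul_tmul_eq_zero_of_inverse hX.mul_map_antipode hX.map_antipode_mul
    (hX.comul_antipode_sum_smul w) ha
  have hε : ∀ i, counit (R := k) (antipode k (∑ j, w j • X i j)) = w i := by
    intro i
    simp [hX.counit_apply, Matrix.one_apply]
  calc ∑ i, a i • ∑ j, w j • X i j = ∑ j, w j • (a' ᵥ* X) j := by
        simp only [a', Matrix.vecMul, dotProduct, Finset.smul_sum, ← Algebra.smul_def]
        rw [Finset.sum_comm]
        exact Finset.sum_congr rfl fun j _ => Finset.sum_congr rfl fun i _ => smul_comm _ _ _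
    _ = sliceRight counit (∑ j, (a' ᵥ* X) j ⊗ₜ[k] antipode k (∑ l, w l • X j l)) := by
        rw [map_sum]
        simp only [sliceRight_tmul, hε]
    _ = 0 := by rw [haX, map_zero]

lemma IsComatrix.exists_mul_transpose_eq_one {ι : Type*} [Fintype ι] [DecidableEq ι]
    {X : Matrix ι ι H} (hX : IsComatrix k X) : ∃ Z : Matrix ι ι H, Z * Xᵀ = 1 := by
  obtain _ | _ := subsingleton_or_nontrivial H
  · exact ⟨0, Subsingleton.elim _ _⟩
  have hS := antipode_injective (k := k) (H := H)
  obtain ⟨h, hh, hhX⟩ := exists_ne_zero_smul_mem_range (hX.mulRightLinearMap_transpose_injective hS)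
    (1 : Matrix ι ι H)
  have h_top : scalarIdeal Xᵀ = ⊤ :=
    ideal_eq_top_of_sliceLeft_comul_mem ((Submodule.ne_bot_iff _).mpr ⟨h, hhX, hh⟩)
      fun _ hy => hX.sliceLeft_comul_mem_scalarIdeal hS hy
  obtain ⟨Z, hZ⟩ := mem_scalarIdeal.mp ((Ideal.eq_top_iff_one _).mp h_top)
  exact ⟨Z, by rw [hZ, one_smul]⟩

theorem antipode_surjective : Function.Surjective (antipode k (A := H)) := by
  intro c
  obtain ⟨n, X, a, w, hX, rfl⟩ := exists_comatrix k c
  obtain ⟨Z, hZ⟩ := hX.exists_mul_transpose_eq_one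
  have hXZ : X.map (antipode k) * (Z.map (antipode k))ᵀ = 1 := by
    rw [map_antipode_mul_transpose_map_antipode, hZ, map_antipode_one, Matrix.transpose_one]
  have hSZ : X = (Z.map (antipode k))ᵀ := left_inv_eq_right_inv hX.mul_map_antipode hXZ
  refine ⟨∑ i, a i • ∑ j, w j • Z j i, ?_⟩
  conv_rhs => rw [hSZ]
  simp

end Field

end NoetherianHopf

theorem antipode_bijective_of_noetherian_residuallyFinDim_general (k : Type*) [Field k]
    (H : Type*) [Ring H] [HopfAlgebra k H] [IsNoetherianRing H] :
    Function.Bijective (HopfAlgebra.antipode (R := k) (A := H)) :=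
  ⟨NoetherianHopf.antipode_injective, NoetherianHopf.antipode_surjective⟩

/-- (Skryabin) The antipode of a Noetherian, residually finite-dimensional Hopf algebra
is bijective. Residually finite-dimensional means that every nonzero element stays
nonzero in some finite-dimensional quotient by a two-sided ideal. -/
theorem antipode_bijective_of_noetherian_residuallyFinDim (k : Type*) [Field k]
    (H : Type*) [Ring H] [HopfAlgebra k H] [IsNoetherianRing H]
    (hres : ∀ x : H, x ≠ 0 → ∃ I : Submodule k H,
      (∀ (a : H), ∀ y ∈ I, a * y ∈ I ∧ y * a ∈ I) ∧
      FiniteDimensional k (H ⧸ I) ∧ x ∉ I) :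
    Function.Bijective (HopfAlgebra.antipode (R := k) (A := H)) :=
  antipode_bijective_of_noetherian_residuallyFinDim_general k H
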